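/- arXiv:1009.4826 — 2 statements merged into one kernel-verified Lean document; each statement's English description precedes it below -/
import Mathlib

section
/- Let U be an n×n unimodular integer matrix, d a positive integer, and 2 ≤ k ≤ n. Then the set of x ∈ ℤ^n such that gcd((Ux)_{n−k+1}, ..., (Ux)_n) = d has natural density (ζ(k)·d^k)^{-1}. -/
open Filter

/-- Real value of the Riemann zeta function at a natural number argument. -/
noncomputable def zetaR (k : ℕ) : ℝ := ∑' n : ℕ, (1 : ℝ) / (n + 1 : ℝ) ^ k

open scoped Classical in
/-- Number of points of `S` in the cube `∏ i, [z i - B, z i + B)`. -/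
noncomputable def cubeCount {k : ℕ} (S : Set (Fin k → ℤ)) (z : Fin k → ℤ) (B : ℕ) : ℕ :=
  (Finset.filter (fun x => x ∈ S)
    (Fintype.piFinset fun i => Finset.Ico (z i - (B : ℤ)) (z i + (B : ℤ)))).card

/-- Natural density in `ℤ^k`: the limit of counts in cubes of side `2B`, for every center. -/
def HasDensity {k : ℕ} (S : Set (Fin k → ℤ)) (δ : ℝ) : Prop :=
  ∀ z : Fin k → ℤ,
    Tendsto (fun B : ℕ => (cubeCount S z B : ℝ) / (2 * (B : ℝ)) ^ k) atTop (nhds δ)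

/-!
Only the block `A` of the last `k` rows of `U` matters, and of it only that `ℤⁿ → ℤᵏ` is surjective.
By Möbius inversion the indicator of `gcd (A x) = d` is the sum over `j` of `μ j` times the
indicator of `j * d ∣ gcd (A x) ≠ 0`. Since `A` remains surjective modulo `m`, the condition
`m ∣ A x` cuts out `mⁿ / mᵏ` residue classes modulo `m`, hence has density `m⁻ᵏ`; dropping the
vectors with `A x = 0` does not change this, because they satisfy `m ∣ A x` for all `m`. Summing the
densities gives `d⁻ᵏ ∑ j, μ j / jᵏ = 1 / (ζ(k) dᵏ)`.

Exchanging sum and limit needs a summable bound that is uniform in the size `B` of the cube. On a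
cube, `A x` is `O(B)`, so a nonzero `A x` divisible by `m` forces `m = O(B)`; in that range the
rounding errors in counting residue classes are harmless and the proportion is `O(m⁻ᵏ)`.
-/

open Finset
open scoped Matrix ArithmeticFunction.Moebius

section Moebius

lemma zetaR_eq_riemannZeta {k : ℕ} (hk : 1 < k) : (zetaR k : ℂ) = riemannZeta k := by
  rw [zeta_eq_tsum_one_div_nat_add_one_cpow (by simpa using hk), zetaR, Complex.ofReal_tsum]
  simp

lemma zetaR_mul_tsum_moebius_div_pow {k : ℕ} (hk : 1 < k) :
    zetaR k * ∑' j : ℕ, (μ j : ℝ) / (j : ℝ) ^ k = 1 := by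
  have hre : 1 < (k : ℂ).re := by simpa using hk
  have hmoebius : LSeries (fun j ↦ (μ j : ℂ)) k = (∑' j : ℕ, (μ j : ℝ) / (j : ℝ) ^ k : ℝ) := by
    rw [LSeries, Complex.ofReal_tsum]
    refine tsum_congr fun j ↦ ?_
    rcases eq_or_ne j 0 with rfl | hj
    · simp
    · simp [LSeries.term_of_ne_zero hj]
  have h := LSeries_one_mul_Lseries_moebius hre
  rw [LSeries_one_eq_riemannZeta hre, ← zetaR_eq_riemannZeta hk, hmoebius] at h
  exact_mod_cast h

lemma sum_divisors_moebius (n : ℕ) : ∑ j ∈ n.divisors, (μ j : ℝ) = if n = 1 then 1 else 0 := by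
  have h := DFunLike.congr_fun (ArithmeticFunction.coe_moebius_mul_coe_zeta (R := ℝ)) n
  rwa [ArithmeticFunction.coe_mul_zeta_apply, ArithmeticFunction.one_apply] at h

lemma hasSum_moebius_mul_indicator {d : ℕ} (hd : d ≠ 0) (a : ℕ) :
    HasSum (fun j ↦ (μ j : ℝ) * {b | j * d ∣ b ∧ b ≠ 0}.indicator 1 a)
      (({d} : Set ℕ).indicator 1 a) := by
  by_cases h : d ∣ a ∧ a ≠ 0
  · obtain ⟨⟨e, rfl⟩, -⟩ := h
    have hmem (j : ℕ) : d * e ∈ {b | j * d ∣ b ∧ b ≠ 0} ↔ j ∈ e.divisors := by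
      simp [mul_comm j d, Nat.mul_dvd_mul_iff_left (Nat.pos_of_ne_zero hd), hd]
    have hsum : ({d} : Set ℕ).indicator (1 : ℕ → ℝ) (d * e) =
        ∑ j ∈ e.divisors, (μ j : ℝ) * {b | j * d ∣ b ∧ b ≠ 0}.indicator 1 (d * e) := by
      calc ({d} : Set ℕ).indicator (1 : ℕ → ℝ) (d * e) = ∑ j ∈ e.divisors, (μ j : ℝ) := by
            simp [sum_divisors_moebius, Set.indicator_apply, hd]
        _ = _ := sum_congr rfl fun j hj ↦ by
            rw [Set.indicator_of_mem ((hmem j).2 hj), Pi.one_apply, mul_one]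
    rw [hsum]
    refine hasSum_sum_of_ne_finset_zero fun j hj ↦ ?_
    rw [Set.indicator_of_notMem (mt (hmem j).1 hj), mul_zero]
  · have hmultiple (j : ℕ) : a ∉ {b | j * d ∣ b ∧ b ≠ 0} :=
      fun hj ↦ h ⟨dvd_of_mul_left_dvd hj.1, hj.2⟩
    have hne : a ∉ ({d} : Set ℕ) := by
      rintro rfl
      exact h ⟨dvd_rfl, hd⟩
    simp only [Set.indicator_of_notMem (hmultiple _), Set.indicator_of_notMem hne, mul_zero]
    exact hasSum_zero

end Moebius

section Density

variable {n : ℕ}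

/-- The half-open cube `∏ i, [z i - B, z i + B)` of centre `z` and side `2B` in which `cubeCount`
counts points. -/
noncomputable def cube (z : Fin n → ℤ) (B : ℕ) : Finset (Fin n → ℤ) :=
  Fintype.piFinset fun i ↦ Ico (z i - (B : ℤ)) (z i + (B : ℤ))

lemma norm_le_of_mem_cube {z x : Fin n → ℤ} {B : ℕ} (hx : x ∈ cube z B) : ‖x‖ ≤ ‖z‖ + B := by
  have hsub : ‖x - z‖ ≤ B := by
    refine (pi_norm_le_iff_of_nonneg B.cast_nonneg).2 fun i ↦ ?_
    have hi := mem_Ico.1 (Fintype.mem_piFinset.1 hx i)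
    rw [Pi.sub_apply, Int.norm_eq_abs]
    exact_mod_cast abs_le.2 ⟨by lia, by lia⟩
  linarith [norm_le_norm_add_norm_sub' x z]

/-- The proportion of the points of `cube z B` lying in `S`, whose limit as `B → ∞` is the density
of `S`. For `B = 0 < n` it is the junk value `0 / 0 = 0`. -/
noncomputable def cubeFreq (S : Set (Fin n → ℤ)) (z : Fin n → ℤ) (B : ℕ) : ℝ :=
  (cubeCount S z B : ℝ) / (2 * (B : ℝ)) ^ n

lemma cubeCount_eq_card_filter (S : Set (Fin n → ℤ)) [DecidablePred (· ∈ S)] (z : Fin n → ℤ)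
    (B : ℕ) : cubeCount S z B = #{x ∈ cube z B | x ∈ S} := by
  unfold cubeCount cube
  congr!

lemma cubeCount_eq_sum_indicator (S : Set (Fin n → ℤ)) (z : Fin n → ℤ) (B : ℕ) :
    (cubeCount S z B : ℝ) = ∑ x ∈ cube z B, S.indicator 1 x := by
  classical
  simp only [cubeCount_eq_card_filter, Set.indicator_apply, Pi.one_apply, sum_boole]

lemma cubeFreq_nonneg (S : Set (Fin n → ℤ)) (z : Fin n → ℤ) (B : ℕ) : 0 ≤ cubeFreq S z B := by
  unfold cubeFreq
  positivity

lemma cubeFreq_mono {S T : Set (Fin n → ℤ)} (z : Fin n → ℤ) (B : ℕ)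
    (h : ∀ x ∈ cube z B, x ∈ S → x ∈ T) : cubeFreq S z B ≤ cubeFreq T z B := by
  classical
  simp only [cubeFreq, cubeCount_eq_card_filter]
  have hsubset : {x ∈ cube z B | x ∈ S} ⊆ {x ∈ cube z B | x ∈ T} := fun x hx ↦
    mem_filter.2 ⟨(mem_filter.1 hx).1, h x (mem_filter.1 hx).1 (mem_filter.1 hx).2⟩
  gcongr

lemma cubeFreq_sdiff {S T : Set (Fin n → ℤ)} (h : S ⊆ T) (z : Fin n → ℤ) (B : ℕ) :
    cubeFreq (T \ S) z B = cubeFreq T z B - cubeFreq S z B := by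
  simp only [cubeFreq, cubeCount_eq_sum_indicator, Set.indicator_sdiff h, Pi.sub_apply,
    sum_sub_distrib, sub_div]

lemma HasDensity.sdiff {S T : Set (Fin n → ℤ)} {σ τ : ℝ} (hT : HasDensity T τ)
    (hS : HasDensity S σ) (h : S ⊆ T) : HasDensity (T \ S) (τ - σ) := fun z ↦
  ((hT z).sub (hS z)).congr fun B ↦ (cubeFreq_sdiff h z B).symm

lemma HasDensity.zero_of_forall_subset {α : Type*} {l : Filter α} [l.NeBot] {S : Set (Fin n → ℤ)}
    {T : α → Set (Fin n → ℤ)} {τ : α → ℝ} (hT : ∀ᶠ a in l, HasDensity (T a) (τ a))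
    (hST : ∀ a, S ⊆ T a) (hτ : Tendsto τ l (nhds 0)) : HasDensity S 0 := by
  intro z
  change Tendsto (cubeFreq S z) atTop (nhds 0)
  refine tendsto_order.2 ⟨fun ε hε ↦ .of_forall fun B ↦ hε.trans_le (cubeFreq_nonneg S z B),
    fun ε hε ↦ ?_⟩
  obtain ⟨a, ha, hτa⟩ := (hT.and (hτ.eventually_lt_const hε)).exists
  filter_upwards [(ha z).eventually_lt_const hτa] with B hB
  exact (cubeFreq_mono z B fun x _ hx ↦ hST a hx).trans_lt hB

lemma hasSum_moebius_mul_cubeFreq (f : (Fin n → ℤ) → ℕ) {d : ℕ} (hd : d ≠ 0) (z : Fin n → ℤ)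
    (B : ℕ) :
    HasSum (fun j ↦ (μ j : ℝ) * cubeFreq {x | j * d ∣ f x ∧ f x ≠ 0} z B)
      (cubeFreq {x | f x = d} z B) := by
  have h := (hasSum_sum fun x (_ : x ∈ cube z B) ↦ hasSum_moebius_mul_indicator hd (f x)).div_const
    ((2 * (B : ℝ)) ^ n)
  simp only [← mul_sum, mul_div_assoc] at h
  simp only [cubeFreq, cubeCount_eq_sum_indicator]
  exact h

theorem HasDensity.setOf_eq_of_dominated {f : (Fin n → ℤ) → ℕ} {δ : ℕ → ℝ}
    (hδ : ∀ m ≠ 0, HasDensity {x | m ∣ f x ∧ f x ≠ 0} (δ m))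
    (hbound : ∀ z : Fin n → ℤ, ∃ b : ℕ → ℝ, Summable b ∧
      ∀ᶠ B in atTop, ∀ m, cubeFreq {x | m ∣ f x ∧ f x ≠ 0} z B ≤ b m)
    {d : ℕ} (hd : d ≠ 0) : HasDensity {x | f x = d} (∑' j, (μ j : ℝ) * δ (j * d)) := by
  intro z
  obtain ⟨b, hb, hfreq⟩ := hbound z
  refine Tendsto.congr (fun B ↦ (hasSum_moebius_mul_cubeFreq f hd z B).tsum_eq) ?_
  refine tendsto_tsum_of_dominated_convergence
    (hb.comp_injective (mul_left_injective₀ hd)) (fun j ↦ ?_) ?_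
  · rcases eq_or_ne j 0 with rfl | hj
    · simp
    · exact (hδ _ (mul_ne_zero hj hd) z).const_mul _
  · filter_upwards [hfreq] with B hB j
    have hμ : |(μ j : ℝ)| ≤ 1 := mod_cast ArithmeticFunction.abs_moebius_le_one
    calc ‖(μ j : ℝ) * cubeFreq {x | j * d ∣ f x ∧ f x ≠ 0} z B‖
        = |(μ j : ℝ)| * cubeFreq {x | j * d ∣ f x ∧ f x ≠ 0} z B := by
          rw [norm_mul, Real.norm_eq_abs, Real.norm_of_nonneg (cubeFreq_nonneg _ _ _)]
      _ ≤ cubeFreq {x | j * d ∣ f x ∧ f x ≠ 0} z B :=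
          mul_le_of_le_one_left (cubeFreq_nonneg _ _ _) hμ
      _ ≤ b (j * d) := hB _

end Density

section Residue

lemma abs_ceil_sub_ceil_sub_le {R : Type*} [CommRing R] [LinearOrder R] [IsStrictOrderedRing R]
    [FloorRing R] (x y : R) : |((⌈x⌉ - ⌈y⌉ : ℤ) : R) - (x - y)| ≤ 1 := by
  rw [Int.cast_sub, abs_le]
  constructor <;>
    linarith [Int.le_ceil x, Int.ceil_lt_add_one x, Int.le_ceil y, Int.ceil_lt_add_one y]

lemma abs_card_Ico_intCast_eq_sub_le {m : ℕ} [NeZero m] {a b : ℤ} (hab : a ≤ b) (v : ZMod m) :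
    |(#{t ∈ Ico a b | ((t : ℤ) : ZMod m) = v} : ℝ) - (b - a) / m| ≤ 1 := by
  have hm : (0 : ℤ) < m := mod_cast Nat.pos_of_neZero m
  have hmod (t : ℤ) : (t : ZMod m) = v ↔ t ≡ v.val [ZMOD m] := by
    simp [← ZMod.intCast_eq_intCast_iff]
  set p : ℚ := (b - (v.val : ℤ)) / (m : ℤ) with hp
  set q : ℚ := (a - (v.val : ℤ)) / (m : ℤ) with hq
  have hqp : ⌈q⌉ ≤ ⌈p⌉ := by
    rw [hp, hq]
    gcongr
  have hcard : (#{t ∈ Ico a b | t ≡ v.val [ZMOD m]} : ℤ) = ⌈p⌉ - ⌈q⌉ := by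
    rw [Int.Ico_filter_modEq_card a b hm, max_eq_left (sub_nonneg.2 hqp)]
  have hrat : |(#{t ∈ Ico a b | t ≡ v.val [ZMOD m]} : ℚ) - (b - a) / m| ≤ 1 := by
    have hsplit : ((b - a) / m : ℚ) = p - q := by
      rw [hp, hq, ← sub_div, sub_sub_sub_cancel_right, Int.cast_natCast]
    rw [hsplit, ← Int.cast_natCast (R := ℚ) (#_), hcard]
    exact abs_ceil_sub_ceil_sub_le p q
  simp only [hmod]
  exact_mod_cast hrat

variable {n m : ℕ}

lemma cubeCount_intCast_mem (T : Finset (Fin n → ZMod m)) (z : Fin n → ℤ) (B : ℕ) :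
    cubeCount {x | (Int.cast ∘ x : Fin n → ZMod m) ∈ T} z B =
      ∑ y ∈ T, ∏ i, #{t ∈ Ico (z i - (B : ℤ)) (z i + (B : ℤ)) | ((t : ℤ) : ZMod m) = y i} := by
  have hmaps (x : Fin n → ℤ) (hx : x ∈ {x ∈ cube z B | (Int.cast ∘ x : Fin n → ZMod m) ∈ T}) :
      (Int.cast ∘ x : Fin n → ZMod m) ∈ T := (mem_filter.1 hx).2
  rw [cubeCount_eq_card_filter]
  refine (card_eq_sum_card_fiberwise hmaps).trans ?_
  refine sum_congr rfl fun y hy ↦ ?_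
  rw [← Fintype.card_piFinset]
  congr 1
  ext x
  simp only [cube, mem_filter, Fintype.mem_piFinset, funext_iff,
    Function.comp_apply, forall_and]
  refine ⟨fun h ↦ ⟨h.1.1, h.2⟩, fun h ↦ ⟨⟨h.1, ?_⟩, h.2⟩⟩
  rwa [show (Int.cast ∘ x : Fin n → ZMod m) = y from funext h.2]

variable [NeZero m]

lemma abs_card_centered_Ico_intCast_eq_sub_le (c : ℤ) (B : ℕ) (v : ZMod m) :
    |(#{t ∈ Ico (c - (B : ℤ)) (c + (B : ℤ)) | ((t : ℤ) : ZMod m) = v} : ℝ) - 2 * B / m| ≤ 1 := by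
  convert abs_card_Ico_intCast_eq_sub_le (show c - B ≤ c + (B : ℤ) by lia) v using 4
  push_cast
  ring

lemma tendsto_card_centered_Ico_intCast_eq_div (c : ℤ) (v : ZMod m) :
    Tendsto (fun B : ℕ ↦
      (#{t ∈ Ico (c - (B : ℤ)) (c + (B : ℤ)) | ((t : ℤ) : ZMod m) = v} : ℝ) / (2 * B))
      atTop (nhds (1 / m)) := by
  have hinv : Tendsto (fun B : ℕ ↦ 1 / (2 * (B : ℝ))) atTop (nhds 0) :=
    (tendsto_natCast_atTop_atTop.const_mul_atTop two_pos).const_div_atTop 1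
  refine tendsto_iff_dist_tendsto_zero.2 (squeeze_zero' (.of_forall fun _ ↦ dist_nonneg) ?_ hinv)
  filter_upwards [eventually_gt_atTop 0] with B hB
  have hB' : (0 : ℝ) < 2 * B := by positivity
  rw [Real.dist_eq, ← mul_div_cancel_left₀ (1 / (m : ℝ)) hB'.ne', ← sub_div, abs_div,
    abs_of_pos hB', mul_one_div]
  gcongr
  exact abs_card_centered_Ico_intCast_eq_sub_le c B v

theorem hasDensity_intCast_mem (T : Finset (Fin n → ZMod m)) :
    HasDensity {x | (Int.cast ∘ x : Fin n → ZMod m) ∈ T} (#T / (m : ℝ) ^ n) := by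
  intro z
  have h := tendsto_finsetSum T fun y _ ↦ tendsto_finsetProd univ fun i _ ↦
    tendsto_card_centered_Ico_intCast_eq_div (z i) (y i)
  simp only [prod_div_distrib, prod_const, card_univ, Fintype.card_fin, one_pow, sum_const,
    nsmul_eq_mul, mul_one_div, ← sum_div] at h
  exact h.congr fun B ↦ by rw [cubeCount_intCast_mem]; push_cast; rfl

lemma cubeCount_intCast_mem_le (T : Finset (Fin n → ZMod m)) (z : Fin n → ℤ) (B : ℕ) :
    (cubeCount {x | (Int.cast ∘ x : Fin n → ZMod m) ∈ T} z B : ℝ) ≤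
      #T * (2 * B / m + 1 : ℝ) ^ n := by
  have hfactor (y : Fin n → ZMod m) (i : Fin n) :
      (#{t ∈ Ico (z i - (B : ℤ)) (z i + (B : ℤ)) | ((t : ℤ) : ZMod m) = y i} : ℝ) ≤
        2 * B / m + 1 := by
    linarith [(abs_le.1 (abs_card_centered_Ico_intCast_eq_sub_le (z i) B (y i))).2]
  rw [cubeCount_intCast_mem, ← nsmul_eq_mul]
  push_cast
  refine sum_le_card_nsmul _ _ _ fun y _ ↦ ?_
  calc _ ≤ ∏ _i : Fin n, (2 * B / m + 1 : ℝ) :=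
        prod_le_prod (fun _ _ ↦ Nat.cast_nonneg _) fun i _ ↦ hfactor y i
    _ = (2 * B / m + 1 : ℝ) ^ n := by simp

end Residue

section Matrix

variable {ι : Type*} [Fintype ι]

/-- The greatest common divisor of the entries of an integer vector, as a natural number; it is `0`
exactly for the zero vector. -/
def vectorGcd (v : ι → ℤ) : ℕ := (univ.gcd v).natAbs

lemma dvd_vectorGcd_iff {v : ι → ℤ} {m : ℕ} : m ∣ vectorGcd v ↔ ∀ i, (m : ℤ) ∣ v i := by
  simp [vectorGcd, ← Int.natCast_dvd, Finset.dvd_gcd_iff]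

lemma dvd_vectorGcd_iff_intCast_comp_eq_zero {v : ι → ℤ} {m : ℕ} :
    m ∣ vectorGcd v ↔ (Int.cast ∘ v : ι → ZMod m) = 0 := by
  simp [dvd_vectorGcd_iff, funext_iff, ZMod.intCast_zmod_eq_zero_iff_dvd]

lemma vectorGcd_eq_zero_iff {v : ι → ℤ} : vectorGcd v = 0 ↔ v = 0 := by
  simp [vectorGcd, Finset.gcd_eq_zero_iff, funext_iff]

lemma vectorGcd_eq_iff {v : ι → ℤ} {d : ℕ} : vectorGcd v = d ↔ univ.gcd v = (d : ℤ) := by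
  have hnonneg : 0 ≤ univ.gcd v := by
    rw [← Finset.normalize_gcd, ← Int.abs_eq_normalize]
    exact abs_nonneg _
  rw [vectorGcd]
  lia

lemma le_norm_of_dvd_vectorGcd {v : ι → ℤ} (hv : vectorGcd v ≠ 0) {m : ℕ} (h : m ∣ vectorGcd v) :
    (m : ℝ) ≤ ‖v‖ := by
  obtain ⟨i, hi⟩ := Function.ne_iff.1 (mt vectorGcd_eq_zero_iff.2 hv)
  calc (m : ℝ) ≤ |v i| := mod_cast Int.le_of_dvd (abs_pos.2 hi)
        ((dvd_abs _ _).2 (dvd_vectorGcd_iff.1 h i))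
    _ = ‖v i‖ := by rw [Int.norm_eq_abs, Int.cast_abs]
    _ ≤ ‖v‖ := norm_le_pi_norm v i

variable {n : ℕ} {A : Matrix ι (Fin n) ℤ}

open scoped Matrix.Norms.Operator in
lemma exists_forall_mem_cube_norm_mulVec_le (A : Matrix ι (Fin n) ℤ) (z : Fin n → ℤ) :
    ∃ K : ℝ, 0 ≤ K ∧ ∀ B : ℕ, B ≠ 0 → ∀ x ∈ cube z B, ‖A *ᵥ x‖ ≤ K * B := by
  refine ⟨‖A‖ * (‖z‖ + 1), by positivity, fun B hB x hx ↦ ?_⟩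
  have hB' : (1 : ℝ) ≤ B := mod_cast Nat.one_le_iff_ne_zero.2 hB
  calc ‖A *ᵥ x‖ ≤ ‖A‖ * ‖x‖ := Matrix.linfty_opNorm_mulVec A x
    _ ≤ ‖A‖ * (‖z‖ * B + B) := by
        gcongr
        linarith [norm_le_of_mem_cube hx, le_mul_of_one_le_right (norm_nonneg z) hB']
    _ = ‖A‖ * (‖z‖ + 1) * B := by ring

lemma card_filter_mulVec_eq_zero_mul {κ R : Type*} [Fintype κ] [DecidableEq κ] [CommRing R]
    [Fintype R] [DecidableEq R] {M : Matrix ι κ R} (hM : Function.Surjective M.mulVec) :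
    #{y | M *ᵥ y = 0} * Fintype.card R ^ Fintype.card ι = Fintype.card R ^ Fintype.card κ := by
  have h := M.mulVecLin.toAddMonoidHom.ker.card_mul_index
  have hker : Nat.card M.mulVecLin.toAddMonoidHom.ker = #{y | M *ᵥ y = 0} :=
    Nat.subtype_card _ (by simp [AddMonoidHom.mem_ker])
  rw [AddSubgroup.index_ker, AddMonoidHom.range_eq_top.2 hM, hker] at h
  simpa [Nat.card_fun] using h

omit [Fintype ι] in
lemma map_intCast_mulVec_intCast_comp (R : Type*) [Ring R] (A : Matrix ι (Fin n) ℤ)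
    (x : Fin n → ℤ) : A.map (Int.cast : ℤ → R) *ᵥ (Int.cast ∘ x) = Int.cast ∘ (A *ᵥ x) :=
  funext fun i ↦ ((Int.castRingHom R).map_mulVec A x i).symm

omit [Fintype ι] in
lemma surjective_mulVec_map_intCast (hA : Function.Surjective A.mulVec) (m : ℕ) :
    Function.Surjective (A.map (Int.cast : ℤ → ZMod m)).mulVec := by
  intro w
  obtain ⟨v, rfl⟩ := (ZMod.intCast_surjective (n := m)).comp_left w
  obtain ⟨x, rfl⟩ := hA v
  exact ⟨Int.cast ∘ x, map_intCast_mulVec_intCast_comp (ZMod m) A x⟩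

lemma setOf_dvd_vectorGcd_mulVec (m : ℕ) [NeZero m] :
    {x | m ∣ vectorGcd (A *ᵥ x)} = {x | (Int.cast ∘ x : Fin n → ZMod m) ∈
      ({y | A.map (Int.cast : ℤ → ZMod m) *ᵥ y = 0} : Finset (Fin n → ZMod m))} := by
  ext x
  simp [map_intCast_mulVec_intCast_comp, dvd_vectorGcd_iff_intCast_comp_eq_zero]

lemma card_filter_map_intCast_mulVec_eq_zero (hA : Function.Surjective A.mulVec) (m : ℕ)
    [NeZero m] :
    (#{y | A.map (Int.cast : ℤ → ZMod m) *ᵥ y = 0} : ℝ) =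
      (m : ℝ) ^ n / (m : ℝ) ^ Fintype.card ι := by
  have h := card_filter_mulVec_eq_zero_mul (surjective_mulVec_map_intCast hA m)
  rw [ZMod.card, Fintype.card_fin] at h
  rw [eq_div_iff (pow_ne_zero _ (NeZero.ne _))]
  exact_mod_cast h

theorem hasDensity_dvd_vectorGcd_mulVec (hA : Function.Surjective A.mulVec) (m : ℕ) [NeZero m] :
    HasDensity {x | m ∣ vectorGcd (A *ᵥ x)} (1 / (m : ℝ) ^ Fintype.card ι) := by
  have hm : (m : ℝ) ^ n ≠ 0 := pow_ne_zero _ (NeZero.ne _)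
  rw [setOf_dvd_vectorGcd_mulVec]
  have hδ : (1 : ℝ) / (m : ℝ) ^ Fintype.card ι =
      #{y | A.map (Int.cast : ℤ → ZMod m) *ᵥ y = 0} / (m : ℝ) ^ n := by
    rw [card_filter_map_intCast_mulVec_eq_zero hA, div_right_comm, div_self hm]
  rw [hδ]
  exact hasDensity_intCast_mem _

theorem hasDensity_vectorGcd_mulVec_eq_zero [Nonempty ι] (hA : Function.Surjective A.mulVec) :
    HasDensity {x | vectorGcd (A *ᵥ x) = 0} 0 := by
  refine .zero_of_forall_subset (l := atTop) (T := fun m ↦ {x | m ∣ vectorGcd (A *ᵥ x)})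
    (τ := fun m ↦ 1 / (m : ℝ) ^ Fintype.card ι) ?_ ?_ ?_
  · filter_upwards [eventually_ne_atTop 0] with m hm
    have : NeZero m := ⟨hm⟩
    exact hasDensity_dvd_vectorGcd_mulVec hA m
  · intro m x hx
    exact Dvd.intro 0 (Eq.symm hx)
  · exact ((tendsto_pow_atTop Fintype.card_ne_zero).comp
      tendsto_natCast_atTop_atTop).const_div_atTop 1

theorem hasDensity_dvd_vectorGcd_mulVec_and_ne_zero [Nonempty ι]
    (hA : Function.Surjective A.mulVec) (m : ℕ) [NeZero m] :
    HasDensity {x | m ∣ vectorGcd (A *ᵥ x) ∧ vectorGcd (A *ᵥ x) ≠ 0}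
      (1 / (m : ℝ) ^ Fintype.card ι) := by
  rw [← sub_zero (1 / (m : ℝ) ^ Fintype.card ι)]
  exact (hasDensity_dvd_vectorGcd_mulVec hA m).sdiff (hasDensity_vectorGcd_mulVec_eq_zero hA)
    fun x hx ↦ Dvd.intro 0 (Eq.symm hx)

theorem exists_cubeFreq_dvd_vectorGcd_mulVec_le (hA : Function.Surjective A.mulVec)
    (z : Fin n → ℤ) :
    ∃ C : ℝ, ∀ B ≠ 0, ∀ m : ℕ,
      cubeFreq {x | m ∣ vectorGcd (A *ᵥ x) ∧ vectorGcd (A *ᵥ x) ≠ 0} z B ≤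
        C / (m : ℝ) ^ Fintype.card ι := by
  obtain ⟨K, hK, hAK⟩ := exists_forall_mem_cube_norm_mulVec_le A z
  refine ⟨((2 + K) / 2) ^ n, fun B hB m ↦ ?_⟩
  by_cases hex : ∃ x ∈ cube z B, m ∣ vectorGcd (A *ᵥ x) ∧ vectorGcd (A *ᵥ x) ≠ 0
  · obtain ⟨x, hx, hdvd, hne⟩ := hex
    have : NeZero m := ⟨fun hm ↦ hne (zero_dvd_iff.1 (hm ▸ hdvd))⟩
    have hm : (0 : ℝ) < m := mod_cast Nat.pos_of_neZero m
    have hmB : (m : ℝ) ≤ K * B := (le_norm_of_dvd_vectorGcd hne hdvd).trans (hAK B hB x hx)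
    calc cubeFreq {x | m ∣ vectorGcd (A *ᵥ x) ∧ vectorGcd (A *ᵥ x) ≠ 0} z B
        ≤ cubeFreq {x | m ∣ vectorGcd (A *ᵥ x)} z B := cubeFreq_mono z B fun _ _ h ↦ h.1
      _ ≤ (m : ℝ) ^ n / (m : ℝ) ^ Fintype.card ι * (2 * B / m + 1) ^ n / (2 * B) ^ n := by
          rw [cubeFreq, setOf_dvd_vectorGcd_mulVec, ← card_filter_map_intCast_mulVec_eq_zero hA]
          gcongr
          exact cubeCount_intCast_mem_le _ z B
      _ = ((2 * B + m) / (2 * B)) ^ n / (m : ℝ) ^ Fintype.card ι := by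
          rw [div_add_one hm.ne', div_pow, div_pow]
          field_simp
      _ ≤ ((2 * B + K * B) / (2 * B)) ^ n / (m : ℝ) ^ Fintype.card ι := by gcongr
      _ = ((2 + K) / 2) ^ n / (m : ℝ) ^ Fintype.card ι := by
          rw [← add_mul, mul_div_mul_right _ _ (Nat.cast_ne_zero.2 hB)]
  · calc cubeFreq {x | m ∣ vectorGcd (A *ᵥ x) ∧ vectorGcd (A *ᵥ x) ≠ 0} z B
        ≤ cubeFreq ∅ z B := cubeFreq_mono z B fun x hx h ↦ hex ⟨x, hx, h⟩
      _ = 0 := by simp [cubeFreq, cubeCount]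
      _ ≤ ((2 + K) / 2) ^ n / (m : ℝ) ^ Fintype.card ι := by positivity

theorem unimodular_gcd_last_coords_density_general (hι : 2 ≤ Fintype.card ι)
    (hA : Function.Surjective A.mulVec) {d : ℕ} (hd : d ≠ 0) :
    HasDensity {x | univ.gcd (A *ᵥ x) = (d : ℤ)}
      (1 / (zetaR (Fintype.card ι) * (d : ℝ) ^ Fintype.card ι)) := by
  have : Nonempty ι := Fintype.card_pos_iff.1 (by lia)
  have hvalue : 1 / (zetaR (Fintype.card ι) * (d : ℝ) ^ Fintype.card ι) =
      ∑' j : ℕ, (μ j : ℝ) * (1 / ((j * d : ℕ) : ℝ) ^ Fintype.card ι) := by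
    rw [← one_div_mul_one_div,
      ← eq_one_div_of_mul_eq_one_right (zetaR_mul_tsum_moebius_div_pow hι), ← tsum_mul_right]
    refine tsum_congr fun j ↦ ?_
    push_cast
    ring
  simp only [← vectorGcd_eq_iff]
  rw [hvalue]
  refine .setOf_eq_of_dominated (δ := fun m ↦ 1 / (m : ℝ) ^ Fintype.card ι) (fun m hm ↦ ?_)
    (fun z ↦ ?_) hd
  · have : NeZero m := ⟨hm⟩
    exact hasDensity_dvd_vectorGcd_mulVec_and_ne_zero hA m
  · obtain ⟨C, hC⟩ := exists_cubeFreq_dvd_vectorGcd_mulVec_le hA z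
    refine ⟨fun m ↦ C / (m : ℝ) ^ Fintype.card ι, ?_, (eventually_ne_atTop 0).mono hC⟩
    simpa only [mul_one_div] using (Real.summable_one_div_nat_pow.2 hι).mul_left C

end Matrix

section LastCoordinates

lemma gcd_filter_mulVec {ι κ R : Type*} [Fintype ι] [Fintype κ] [CommSemiring R]
    [NormalizedGCDMonoid R] (M : Matrix ι κ R) (v : κ → R) (p : ι → Prop) [DecidablePred p] :
    (univ.filter p).gcd (M *ᵥ v) =
      univ.gcd (M.submatrix (Subtype.val : Subtype p → ι) id *ᵥ v) := by
  classical
  rw [← subtype_univ, ← Finset.subtype_map, Finset.map_eq_image, Finset.gcd_image]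
  rfl

lemma card_subtype_sub_le_val {n k : ℕ} (hkn : k ≤ n) :
    Fintype.card {i : Fin n // n - k ≤ (i : ℕ)} = k := by
  have hlt : Fintype.card {i : Fin n // (i : ℕ) < n - k} = n - k := by
    rw [Fintype.card_subtype, Fin.card_filter_val_lt, min_eq_right (n.sub_le k)]
  simp only [← not_lt, Fintype.card_subtype_compl, hlt, Fintype.card_fin]
  exact Nat.sub_sub_self hkn

lemma surjective_submatrix_subtype_mulVec {ι R : Type*} [Fintype ι] [DecidableEq ι] [CommRing R]
    {U : Matrix ι ι R} (hU : IsUnit U.det) (p : ι → Prop) :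
    Function.Surjective (U.submatrix (Subtype.val : Subtype p → ι) id).mulVec := by
  intro w
  obtain ⟨v, rfl⟩ := Subtype.val_injective.surjective_comp_right w
  obtain ⟨x, rfl⟩ := Matrix.mulVec_surjective_iff_isUnit.2 ((Matrix.isUnit_iff_isUnit_det U).2 hU) v
  exact ⟨x, rfl⟩

end LastCoordinates

/-- Proposition: for unimodular `U` and `2 ≤ k ≤ n`, the set of `x` with
`gcd` of the last `k` coordinates of `Ux` equal to `d` has density `1/(ζ(k)·d^k)`. -/
theorem unimodular_gcd_last_coords_density (n k : ℕ) (hk2 : 2 ≤ k) (hkn : k ≤ n)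
    (U : Matrix (Fin n) (Fin n) ℤ) (hU : U.det = 1 ∨ U.det = -1) (d : ℕ) (hd : 1 ≤ d) :
    HasDensity
      {x : Fin n → ℤ |
        (Finset.univ.filter fun i : Fin n => n - k ≤ (i : ℕ)).gcd (U.mulVec x) = (d : ℤ)}
      (1 / (zetaR k * (d : ℝ) ^ k)) := by
  simpa only [gcd_filter_mulVec, card_subtype_sub_le_val hkn] using
    unimodular_gcd_last_coords_density_general (by rwa [card_subtype_sub_le_val hkn])
      (surjective_submatrix_subtype_mulVec (Int.isUnit_iff.2 hU) fun i ↦ n - k ≤ (i : ℕ))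
      (Nat.one_le_iff_ne_zero.1 hd)
end

section
/- Let n ≤ m, d_1,...,d_{n−1} positive integers, d ≥ 1 and 0 ≤ r < d. The natural density of n×m integer matrices A with diag(HNF(A)) = (d_1,...,d_{n−1}, a) for some a ≡ r (mod d) equals (1/d) times the natural density of matrices with diag(HNF(A)) beginning with (d_1,...,d_{n−1}). -/
open Filter

open scoped Classical in
/-- Number of matrices of `S` in the cube of side `2B` centered at `z`. -/
noncomputable def matCubeCount {n m : ℕ} (S : Set (Matrix (Fin n) (Fin m) ℤ))
    (z : Matrix (Fin n) (Fin m) ℤ) (B : ℕ) : ℕ :=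
  (Finset.filter (fun A : Fin n → Fin m → ℤ => Matrix.of A ∈ S)
    (Fintype.piFinset fun i =>
      Fintype.piFinset fun l => Finset.Ico (z i l - (B : ℤ)) (z i l + (B : ℤ)))).card

/-- Natural density of a set of `n × m` integer matrices, via counting in cubes
of side `2B` and arbitrary center, normalized by `(2B)^(nm)`. -/
def HasMatDensity {n m : ℕ} (S : Set (Matrix (Fin n) (Fin m) ℤ)) (δ : ℝ) : Prop :=
  ∀ z : Matrix (Fin n) (Fin m) ℤ,
    Tendsto (fun B : ℕ => (matCubeCount S z B : ℝ) / (2 * (B : ℝ)) ^ (n * m))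
      atTop (nhds δ)

/-- `H` is in Hermite normal form with `r` nonzero rows and pivot columns `j`. -/
def IsHNFWith {n m : ℕ} (H : Matrix (Fin n) (Fin m) ℤ) (r : ℕ) (hr : r ≤ n)
    (j : Fin r → Fin m) : Prop :=
  StrictMono j ∧
  (∀ i : Fin n, r ≤ (i : ℕ) → ∀ l, H i l = 0) ∧
  (∀ i : Fin r, 0 < H (Fin.castLE hr i) (j i)) ∧
  (∀ i : Fin r, ∀ l : Fin m, (l : ℕ) < (j i : ℕ) → H (Fin.castLE hr i) l = 0) ∧
  (∀ i : Fin r, ∀ k : Fin n, (k : ℕ) < (i : ℕ) →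
    0 ≤ H k (j i) ∧ H k (j i) < H (Fin.castLE hr i) (j i))

/-- `H` is in Hermite normal form. -/
def IsHNF {n m : ℕ} (H : Matrix (Fin n) (Fin m) ℤ) : Prop :=
  ∃ (r : ℕ) (hr : r ≤ n) (j : Fin r → Fin m), IsHNFWith H r hr j

/-- A square integer matrix is unimodular if its determinant is `±1`. -/
def IsUnimodular {n : ℕ} (U : Matrix (Fin n) (Fin n) ℤ) : Prop :=
  U.det = 1 ∨ U.det = -1

/-- `H` is the Hermite normal form of `A`: `H` is in HNF and `A = U * H`
for some unimodular `U`. -/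
def IsHNFOf {n m : ℕ} (H A : Matrix (Fin n) (Fin m) ℤ) : Prop :=
  IsHNF H ∧ ∃ U : Matrix (Fin n) (Fin n) ℤ, IsUnimodular U ∧ A = U * H

/-!
Bringing the first `n - 1` columns of `A` to Hermite form with diagonal `(d₁, …, d_{n-1})` takes a
unimodular `U` whose last row `w` is determined up to sign: it spans the integer vectors orthogonal
to these columns. The last diagonal entry of the Hermite normal form of `A` is then `|w ⬝ᵥ a|`, with
`a` the `n`-th column of `A`. Thus, with all other columns fixed, only the residue of `|w ⬝ᵥ a|`
matters, where `w` is primitive. Translating `a` by a bounded vector, with sign depending on the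
side of the hyperplane `w ⬝ᵥ a = 0`, permutes the residue classes up to an error `O(B^{n-1})`
over a cube of side `2B`, uniformly in `w`; averaging over the other columns yields the factor
`1/t`.
-/

open Finset Matrix

theorem intCast_eq_natCast_iff_emod_eq {x : ℤ} {r t : ℕ} (hrt : r < t) :
    (x : ZMod t) = r ↔ x % t = r := by
  rw [← Int.cast_natCast r, ZMod.intCast_eq_intCast_iff, Int.ModEq,
    Int.emod_eq_of_lt (Int.natCast_nonneg r) (by exact_mod_cast hrt)]

section DotProduct

variable {ι : Type*} [Fintype ι]

theorem dotProduct_sub_dotProduct_of_eqOn_compl {w a b : ι → ℤ} {i : ι}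
    (h : ∀ j ≠ i, a j = b j) : w ⬝ᵥ a - w ⬝ᵥ b = w i * (a i - b i) := by
  rw [← dotProduct_sub, dotProduct, sum_eq_single i] <;> simp +contextual [h]

theorem exists_forall_abs_dotProduct_lt {w : ι → ℤ} (hw : w ≠ 0) :
    ∃ i, ∀ {e : ι → ℤ} {t : ℕ}, (∀ j, |e j| < t) →
      |w ⬝ᵥ e| < (Fintype.card ι * t : ℕ) * |w i| := by
  obtain ⟨j, hj⟩ := Function.ne_iff.1 hw
  have : Nonempty ι := ⟨j⟩
  obtain ⟨i, hi⟩ := Finite.exists_max fun j => |w j|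
  refine ⟨i, fun {e t} he => ?_⟩
  calc |w ⬝ᵥ e| ≤ ∑ j, |w j * e j| := abs_sum_le_sum_abs _ _
    _ < ∑ _j : ι, |w i| * t := by
        refine sum_lt_sum_of_nonempty univ_nonempty fun j _ => ?_
        rw [abs_mul]
        exact mul_lt_mul' (hi j) (he j) (abs_nonneg _) ((abs_pos.2 hj).trans_le (hi _))
    _ = (Fintype.card ι * t : ℕ) * |w i| := by
        rw [sum_const, card_univ, nsmul_eq_mul]; push_cast; ring

theorem exists_bounded_dotProduct_cast_eq {w : ι → ℤ} (hw : ∃ x, w ⬝ᵥ x = 1) {t : ℕ} [NeZero t]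
    (ρ : ZMod t) : ∃ e : ι → ℤ, (∀ i, |e i| < t) ∧ ((w ⬝ᵥ e : ℤ) : ZMod t) = ρ := by
  obtain ⟨x, hx⟩ := hw
  refine ⟨fun i => ((ρ * x i).val : ℤ), fun i => ?_, ?_⟩
  · rw [Nat.abs_cast]
    exact_mod_cast ZMod.val_lt _
  · calc ((∑ i, w i * ((ρ * x i).val : ℤ) : ℤ) : ZMod t) = ρ * ((w ⬝ᵥ x : ℤ) : ZMod t) := by
          simp [dotProduct, mul_sum, mul_left_comm]
      _ = ρ := by rw [hx, Int.cast_one, mul_one]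

/-- The translate of `a` by `±e`, the sign being that of `w ⬝ᵥ a`: away from the hyperplane
`w ⬝ᵥ a = 0` this map changes `|w ⬝ᵥ a|` by the constant `w ⬝ᵥ e`. -/
def signTranslate (w e a : ι → ℤ) : ι → ℤ := a + (w ⬝ᵥ a).sign • e

theorem dotProduct_signTranslate (w e a : ι → ℤ) :
    w ⬝ᵥ signTranslate w e a = w ⬝ᵥ a + (w ⬝ᵥ a).sign * w ⬝ᵥ e := by
  rw [signTranslate, dotProduct_add, dotProduct_smul, smul_eq_mul]

theorem sign_dotProduct_signTranslate {w e a : ι → ℤ} (h : |w ⬝ᵥ e| < |w ⬝ᵥ a|) :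
    (w ⬝ᵥ signTranslate w e a).sign = (w ⬝ᵥ a).sign := by
  rw [dotProduct_signTranslate]
  obtain ha | ha | ha := lt_trichotomy (w ⬝ᵥ a) 0
  · rw [abs_of_neg ha, abs_lt] at h
    rw [Int.sign_eq_neg_one_of_neg ha, Int.sign_eq_neg_one_of_neg (by linarith)]
  · simp [ha]
  · rw [abs_of_pos ha, abs_lt] at h
    rw [Int.sign_eq_one_of_pos ha, Int.sign_eq_one_of_pos (by linarith)]

theorem abs_dotProduct_signTranslate {w e a : ι → ℤ} (h : |w ⬝ᵥ e| < |w ⬝ᵥ a|) :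
    |w ⬝ᵥ signTranslate w e a| = |w ⬝ᵥ a| + w ⬝ᵥ e := by
  have ha : w ⬝ᵥ a ≠ 0 := abs_pos.1 ((abs_nonneg _).trans_lt h)
  rw [← Int.sign_mul_self_eq_abs, sign_dotProduct_signTranslate h, dotProduct_signTranslate,
    mul_add, Int.sign_mul_self_eq_abs, ← mul_assoc, ← Int.sign_mul,
    Int.sign_eq_one_of_pos (mul_self_pos.2 ha), one_mul]

theorem signTranslate_injOn (w e : ι → ℤ) :
    Set.InjOn (signTranslate w e) {a | |w ⬝ᵥ e| < |w ⬝ᵥ a|} := by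
  intro a ha b hb hab
  have hsign : (w ⬝ᵥ a).sign = (w ⬝ᵥ b).sign := by
    rw [← sign_dotProduct_signTranslate ha, ← sign_dotProduct_signTranslate hb, hab]
  rw [signTranslate, signTranslate, hsign] at hab
  exact add_right_cancel hab

end DotProduct

section IntBox

theorem card_le_of_forall_lt_add {T : Finset ℤ} {K : ℕ} (h : ∀ x ∈ T, ∀ y ∈ T, x < y + K) :
    #T ≤ K := by
  rcases T.eq_empty_or_nonempty with rfl | hT
  · simp
  · have hsub : T ⊆ Ico (T.min' hT) (T.min' hT + K) := fun x hx =>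
      mem_Ico.2 ⟨T.min'_le x hx, h x hx _ (T.min'_mem hT)⟩
    simpa using card_le_card hsub

variable {ι : Type*} [Fintype ι] [DecidableEq ι]

/-- The cube of side `2B` centered at `z` in `ℤ^ι`; the cubes of `matCubeCount` are products of
such cubes. -/
noncomputable def intBox (z : ι → ℤ) (B : ℕ) : Finset (ι → ℤ) :=
  Fintype.piFinset fun i => Ico (z i - B) (z i + B)

theorem mem_intBox {z a : ι → ℤ} {B : ℕ} :
    a ∈ intBox z B ↔ ∀ i, z i - B ≤ a i ∧ a i < z i + B := by
  simp [intBox]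

theorem card_intBox (z : ι → ℤ) (B : ℕ) : #(intBox z B) = (2 * B) ^ Fintype.card ι := by
  have hside (i : ι) : #(Ico (z i - B) (z i + B)) = 2 * B := by rw [Int.card_Ico]; omega
  simp only [intBox, Fintype.card_piFinset, hside, prod_const, card_univ]

theorem card_intBox_slab_le (z w : ι → ℤ) (B K : ℕ) (L : ℤ) (i : ι) :
    2 * B * #{a ∈ intBox z B | L ≤ w ⬝ᵥ a ∧ w ⬝ᵥ a < L + K * |w i|} ≤
      K * (2 * B) ^ Fintype.card ι := by
  have hfib : #{a ∈ intBox z B | L ≤ w ⬝ᵥ a ∧ w ⬝ᵥ a < L + K * |w i|} ≤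
      K * #(intBox (fun j : {j // j ≠ i} => z j) B) := by
    refine card_le_mul_card_image_of_maps_to (f := fun (a : ι → ℤ) (j : {j // j ≠ i}) => a j)
      (fun a ha => mem_intBox.2 fun j => mem_intBox.1 (mem_filter.1 ha).1 j) K fun b _ => ?_
    rw [← card_image_of_injOn (f := fun a : ι → ℤ => a i)]
    · refine card_le_of_forall_lt_add ?_
      simp only [mem_image, mem_filter]
      rintro _ ⟨a, ⟨⟨-, ha⟩, rfl⟩, rfl⟩ _ ⟨a', ⟨⟨-, ha'⟩, hb⟩, rfl⟩
      have hlt : |a i - a' i| * |w i| < K * |w i| := by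
        rw [mul_comm, ← abs_mul, ← dotProduct_sub_dotProduct_of_eqOn_compl fun j hj =>
          (congrFun hb ⟨j, hj⟩).symm, abs_lt]
        constructor <;> linarith
      linarith [le_abs_self (a i - a' i), lt_of_mul_lt_mul_right hlt (abs_nonneg _)]
    · intro a ha a' ha' h
      funext j
      by_cases hj : j = i
      · exact hj ▸ h
      · exact congrFun ((mem_filter.1 ha).2.trans (mem_filter.1 ha').2.symm) ⟨j, hj⟩
  calc _ ≤ 2 * B * (K * #(intBox (fun j : {j // j ≠ i} => z j) B)) := by gcongr
    _ = K * (2 * B * (2 * B) ^ Fintype.card {j // j ≠ i}) := by rw [card_intBox]; ring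
    _ = K * (2 * B) ^ Fintype.card ι := by
      rw [← pow_succ', Fintype.card_subtype_compl, Fintype.card_subtype_eq,
        Nat.sub_add_cancel (Fintype.card_pos_iff.2 ⟨i⟩)]

theorem signTranslate_mem_intBox {z w e a : ι → ℤ} {B t : ℕ} (he : ∀ i, |e i| < t)
    (ha : ∀ i, z i - B + t ≤ a i ∧ a i < z i + B - t) : signTranslate w e a ∈ intBox z B := by
  refine mem_intBox.2 fun i => ?_
  have hshift : |(w ⬝ᵥ a).sign * e i| < t := by
    have ht : 0 < t := by exact_mod_cast (abs_nonneg _).trans_lt (he i)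
    rcases Int.sign_trichotomy (w ⬝ᵥ a) with h | h | h <;> simp [h, he i, ht]
  obtain ⟨hl, hr⟩ := abs_lt.1 hshift
  obtain ⟨hla, hra⟩ := ha i
  change z i - B ≤ a i + (w ⬝ᵥ a).sign * e i ∧ a i + (w ⬝ᵥ a).sign * e i < z i + B
  constructor <;> linarith

theorem card_intBox_near_face_le (z : ι → ℤ) (B t : ℕ) :
    2 * B * #{a ∈ intBox z B | ∃ i, a i < z i - B + t ∨ z i + B - t ≤ a i} ≤
      2 * Fintype.card ι * t * (2 * B) ^ Fintype.card ι := by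
  let slab (i : ι) (L : ℤ) : Finset (ι → ℤ) := {a ∈ intBox z B | L ≤ a i ∧ a i < L + t}
  have hslab (i : ι) (L : ℤ) : 2 * B * #(slab i L) ≤ t * (2 * B) ^ Fintype.card ι := by
    simpa [slab] using card_intBox_slab_le z (Pi.single i 1) B t L i
  have hsub : {a ∈ intBox z B | ∃ i, a i < z i - B + t ∨ z i + B - t ≤ a i} ⊆
      univ.biUnion fun i => slab i (z i - B) ∪ slab i (z i + B - t) := by
    intro a ha
    obtain ⟨haB, i, hi⟩ := mem_filter.1 ha
    have := mem_intBox.1 haB i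
    simp only [slab, mem_biUnion, mem_univ, true_and, mem_union, mem_filter, haB]
    exact ⟨i, by omega⟩
  calc 2 * B * #{a ∈ intBox z B | ∃ i, a i < z i - B + t ∨ z i + B - t ≤ a i}
      ≤ 2 * B * ∑ i, (#(slab i (z i - B)) + #(slab i (z i + B - t))) := by
        gcongr
        exact (card_le_card hsub).trans <| card_biUnion_le.trans <|
          sum_le_sum fun i _ => card_union_le _ _
    _ = ∑ i, (2 * B * #(slab i (z i - B)) + 2 * B * #(slab i (z i + B - t))) := by
        simp only [mul_sum, mul_add]
    _ ≤ ∑ _i : ι, (t * (2 * B) ^ Fintype.card ι + t * (2 * B) ^ Fintype.card ι) :=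
        sum_le_sum fun i _ => add_le_add (hslab i _) (hslab i _)
    _ = 2 * Fintype.card ι * t * (2 * B) ^ Fintype.card ι := by
        rw [sum_const, card_univ, smul_eq_mul]; ring

theorem card_intBox_abs_dotProduct_lt_le (z w : ι → ℤ) (B K : ℕ) (i : ι) :
    2 * B * #{a ∈ intBox z B | |w ⬝ᵥ a| < K * |w i|} ≤ 2 * K * (2 * B) ^ Fintype.card ι := by
  refine le_trans ?_ (card_intBox_slab_le z w B (2 * K) (-(K * |w i|)) i)
  gcongr with a
  intro h
  obtain ⟨hl, hr⟩ := abs_lt.1 h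
  push_cast
  constructor <;> linarith

/- Translating `a` by `±e`, with the sign of `w ⬝ᵥ a`, adds `w ⬝ᵥ e` to `|w ⬝ᵥ a|` as long as `a` is
far from the hyperplane `w ⬝ᵥ a = 0`, so it moves one residue class into another up to points near
that hyperplane or near a face of the cube. -/
theorem card_intBox_abs_residue_le {w : ι → ℤ} (hw : ∃ x, w ⬝ᵥ x = 1) {t : ℕ} [NeZero t]
    (z : ι → ℤ) (B : ℕ) (ρ σ : ZMod t) :
    2 * B * #{a ∈ intBox z B | ((|w ⬝ᵥ a| : ℤ) : ZMod t) = ρ} ≤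
      2 * B * #{a ∈ intBox z B | ((|w ⬝ᵥ a| : ℤ) : ZMod t) = σ} +
        4 * Fintype.card ι * t * (2 * B) ^ Fintype.card ι := by
  obtain ⟨e, he, hwe⟩ := exists_bounded_dotProduct_cast_eq hw (σ - ρ)
  have hw0 : w ≠ 0 := by
    rintro rfl
    simp at hw
  obtain ⟨i, hi⟩ := exists_forall_abs_dotProduct_lt hw0
  let residue (τ : ZMod t) := {a ∈ intBox z B | ((|w ⬝ᵥ a| : ℤ) : ZMod t) = τ}
  let nearFace := {a ∈ intBox z B | ∃ i, a i < z i - B + t ∨ z i + B - t ≤ a i}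
  let nearHyperplane := {a ∈ intBox z B | |w ⬝ᵥ a| < (Fintype.card ι * t : ℕ) * |w i|}
  have hfar {a : ι → ℤ} (ha : a ∈ residue ρ \ (nearFace ∪ nearHyperplane)) :
      (∀ j, z j - B + t ≤ a j ∧ a j < z j + B - t) ∧ |w ⬝ᵥ e| < |w ⬝ᵥ a| ∧
        ((|w ⬝ᵥ a| : ℤ) : ZMod t) = ρ := by
    simp only [residue, nearFace, nearHyperplane, Finset.mem_sdiff, mem_union, mem_filter,
      not_or, not_and, not_exists, not_lt, not_le] at ha
    obtain ⟨⟨haB, haρ⟩, hface, hhyp⟩ := ha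
    exact ⟨hface haB, (hi he).trans_le (hhyp haB), haρ⟩
  have htranslate : #(residue ρ \ (nearFace ∪ nearHyperplane)) ≤ #(residue σ) := by
    refine card_le_card_of_injOn (signTranslate w e) (fun a ha => ?_)
      ((signTranslate_injOn w e).mono fun a ha => (hfar ha).2.1)
    obtain ⟨hface, hhyp, haρ⟩ := hfar ha
    refine mem_filter.2 ⟨signTranslate_mem_intBox he hface, ?_⟩
    rw [abs_dotProduct_signTranslate hhyp, Int.cast_add, haρ, hwe, add_sub_cancel]
  have hcard : #(residue ρ) ≤ #(residue σ) + (#nearFace + #nearHyperplane) := by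
    have := le_card_sdiff (nearFace ∪ nearHyperplane) (residue ρ)
    have := card_union_le nearFace nearHyperplane
    omega
  have hface := card_intBox_near_face_le z B t
  have hhyp := card_intBox_abs_dotProduct_lt_le z w B (Fintype.card ι * t) i
  calc 2 * B * #(residue ρ) ≤ 2 * B * (#(residue σ) + (#nearFace + #nearHyperplane)) := by gcongr
    _ = 2 * B * #(residue σ) + (2 * B * #nearFace + 2 * B * #nearHyperplane) := by ring
    _ ≤ 2 * B * #(residue σ) + (2 * Fintype.card ι * t * (2 * B) ^ Fintype.card ι +
          2 * (Fintype.card ι * t) * (2 * B) ^ Fintype.card ι) := by gcongr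
    _ = 2 * B * #(residue σ) + 4 * Fintype.card ι * t * (2 * B) ^ Fintype.card ι := by ring

theorem abs_mul_card_intBox_abs_residue_sub_le {w : ι → ℤ} (hw : ∃ x, w ⬝ᵥ x = 1) {t : ℕ}
    [NeZero t] (z : ι → ℤ) (B : ℕ) (ρ : ZMod t) :
    2 * (B : ℝ) * |(t : ℝ) * #{a ∈ intBox z B | ((|w ⬝ᵥ a| : ℤ) : ZMod t) = ρ} -
      #(intBox z B)| ≤ t * (4 * Fintype.card ι * t) * (2 * B) ^ Fintype.card ι := by
  let f (τ : ZMod t) : ℝ := #{a ∈ intBox z B | ((|w ⬝ᵥ a| : ℤ) : ZMod t) = τ}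
  have hdiff (σ τ : ZMod t) :
      2 * (B : ℝ) * (f σ - f τ) ≤ 4 * Fintype.card ι * t * (2 * B) ^ Fintype.card ι := by
    have := card_intBox_abs_residue_le hw z B σ τ
    rw [mul_sub, sub_le_iff_le_add']
    simp only [f]
    exact_mod_cast this
  have hsum : (#(intBox z B) : ℝ) = ∑ τ, f τ := by
    rw [card_eq_sum_card_fiberwise fun a _ => mem_univ ((|w ⬝ᵥ a| : ℤ) : ZMod t)]
    push_cast
    rfl
  calc 2 * (B : ℝ) * |t * f ρ - #(intBox z B)| = |∑ τ, 2 * (B : ℝ) * (f ρ - f τ)| := by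
        rw [← mul_sum, sum_sub_distrib, sum_const, card_univ, ZMod.card, nsmul_eq_mul, ← hsum,
          abs_mul, abs_of_nonneg (by positivity : 0 ≤ 2 * (B : ℝ))]
    _ ≤ ∑ τ, |2 * (B : ℝ) * (f ρ - f τ)| := abs_sum_le_sum_abs _ _
    _ ≤ ∑ _τ : ZMod t, 4 * Fintype.card ι * t * (2 * (B : ℝ)) ^ Fintype.card ι := by
        refine sum_le_sum fun τ _ => abs_le'.2 ⟨hdiff ρ τ, ?_⟩
        rw [← mul_neg, neg_sub]
        exact hdiff τ ρ
    _ = t * (4 * Fintype.card ι * t) * (2 * B) ^ Fintype.card ι := by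
        rw [sum_const, card_univ, ZMod.card, nsmul_eq_mul]; ring

end IntBox

section ColumnDiscrepancy

variable {n m : ℕ}

/-- The cube of matrices over which `matCubeCount` counts, as a product over the rows of cubes
`intBox`. -/
noncomputable def matCube (z : Matrix (Fin n) (Fin m) ℤ) (B : ℕ) :
    Finset (Matrix (Fin n) (Fin m) ℤ) :=
  Fintype.piFinset fun i => intBox (z i) B

theorem mem_matCube {z A : Matrix (Fin n) (Fin m) ℤ} {B : ℕ} :
    A ∈ matCube z B ↔ ∀ i l, z i l - B ≤ A i l ∧ A i l < z i l + B :=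
  Fintype.mem_piFinset.trans (forall_congr' fun _ => mem_intBox)

theorem card_matCube (z : Matrix (Fin n) (Fin m) ℤ) (B : ℕ) :
    #(matCube z B) = (2 * B) ^ (n * m) := by
  refine (Fintype.card_piFinset _).trans ?_
  simp only [card_intBox, Fintype.card_fin, prod_const, card_univ]
  rw [← pow_mul, mul_comm m n]

open scoped Classical in
theorem matCubeCount_eq_sum (S : Set (Matrix (Fin n) (Fin m) ℤ)) (z : Matrix (Fin n) (Fin m) ℤ)
    (B : ℕ) : (matCubeCount S z B : ℝ) = ∑ A ∈ matCube z B, if A ∈ S then 1 else 0 := by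
  rw [sum_boole]
  rfl

theorem updateCol_mem_matCube {z A : Matrix (Fin n) (Fin m) ℤ} {B : ℕ} {c : Fin m}
    {a : Fin n → ℤ} (hA : A ∈ matCube z B) (ha : a ∈ intBox (z.col c) B) :
    A.updateCol c a ∈ matCube z B := by
  refine mem_matCube.2 fun i l => ?_
  rw [updateCol_apply]
  split_ifs with h
  · exact h ▸ mem_intBox.1 ha i
  · exact mem_matCube.1 hA i l

theorem col_mem_intBox {z A : Matrix (Fin n) (Fin m) ℤ} {B : ℕ} (c : Fin m)
    (hA : A ∈ matCube z B) : A.col c ∈ intBox (z.col c) B :=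
  mem_intBox.2 fun i => mem_matCube.1 hA i c

/- The exchange `(A, a) ↦ (A.updateCol c a, A.col c)` is an involution. -/
theorem sum_matCube_sum_updateCol (z : Matrix (Fin n) (Fin m) ℤ) (B : ℕ) (c : Fin m)
    (g : Matrix (Fin n) (Fin m) ℤ → ℝ) :
    ∑ A ∈ matCube z B, ∑ a ∈ intBox (z.col c) B, g (A.updateCol c a) =
      (2 * B) ^ n * ∑ A ∈ matCube z B, g A := by
  have hexchange (p : Matrix (Fin n) (Fin m) ℤ × (Fin n → ℤ)) :
      ((p.1.updateCol c p.2).updateCol c (p.1.col c), (p.1.updateCol c p.2).col c) = p := by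
    refine Prod.ext ?_ ?_
    · exact (updateCol_idem ..).trans (updateCol_eq_self ..)
    · exact funext fun i => updateCol_self
  have hmem : ∀ p ∈ matCube z B ×ˢ intBox (z.col c) B,
      (p.1.updateCol c p.2, p.1.col c) ∈ matCube z B ×ˢ intBox (z.col c) B := fun p hp =>
    mk_mem_product (updateCol_mem_matCube (mem_product.1 hp).1 (mem_product.1 hp).2)
      (col_mem_intBox c (mem_product.1 hp).1)
  calc ∑ A ∈ matCube z B, ∑ a ∈ intBox (z.col c) B, g (A.updateCol c a)
      = ∑ p ∈ matCube z B ×ˢ intBox (z.col c) B, g (p.1.updateCol c p.2) := by rw [sum_product]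
    _ = ∑ p ∈ matCube z B ×ˢ intBox (z.col c) B, g p.1 :=
        sum_nbij' (fun p => (p.1.updateCol c p.2, p.1.col c))
          (fun p => (p.1.updateCol c p.2, p.1.col c)) hmem hmem (fun p _ => hexchange p)
          (fun p _ => hexchange p) fun _ _ => rfl
    _ = (2 * B) ^ n * ∑ A ∈ matCube z B, g A := by
        simp only [sum_product, sum_const, card_intBox, Fintype.card_fin, mul_sum, nsmul_eq_mul]
        push_cast
        rfl

open scoped Classical in
theorem abs_mul_matCubeCount_sub_le_of_column {S S' : Set (Matrix (Fin n) (Fin m) ℤ)} {c : Fin m}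
    {C s : ℝ} {z : Matrix (Fin n) (Fin m) ℤ} {B : ℕ} (hB : 0 < B)
    (hcol : ∀ A : Matrix (Fin n) (Fin m) ℤ,
      2 * (B : ℝ) * |s * #{a ∈ intBox (z.col c) B | A.updateCol c a ∈ S'} -
        #{a ∈ intBox (z.col c) B | A.updateCol c a ∈ S}| ≤ C * (2 * B) ^ n) :
    2 * (B : ℝ) * |s * matCubeCount S' z B - matCubeCount S z B| ≤ C * (2 * B) ^ (n * m) := by
  let g (A : Matrix (Fin n) (Fin m) ℤ) : ℝ :=
    s * (if A ∈ S' then 1 else 0) - if A ∈ S then 1 else 0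
  have hcount : s * matCubeCount S' z B - matCubeCount S z B = ∑ A ∈ matCube z B, g A := by
    rw [matCubeCount_eq_sum, matCubeCount_eq_sum, mul_sum, sum_sub_distrib]
  have hg (A : Matrix (Fin n) (Fin m) ℤ) :
      2 * (B : ℝ) * |∑ a ∈ intBox (z.col c) B, g (A.updateCol c a)| ≤ C * (2 * B) ^ n := by
    simpa only [g, sum_sub_distrib, ← mul_sum, sum_boole] using hcol A
  have hpow : 0 < (2 * (B : ℝ)) ^ n := by positivity
  refine le_of_mul_le_mul_left ?_ hpow
  calc (2 * (B : ℝ)) ^ n * (2 * B * |s * matCubeCount S' z B - matCubeCount S z B|)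
      = 2 * B * |∑ A ∈ matCube z B, ∑ a ∈ intBox (z.col c) B, g (A.updateCol c a)| := by
        rw [sum_matCube_sum_updateCol, hcount, abs_mul, abs_of_pos hpow, mul_left_comm]
    _ ≤ 2 * B * ∑ A ∈ matCube z B, |∑ a ∈ intBox (z.col c) B, g (A.updateCol c a)| := by
        gcongr
        exact abs_sum_le_sum_abs _ _
    _ ≤ ∑ _A ∈ matCube z B, C * (2 * (B : ℝ)) ^ n := by
        rw [mul_sum]
        exact sum_le_sum fun A _ => hg A
    _ = (2 * B) ^ n * (C * (2 * B) ^ (n * m)) := by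
        rw [sum_const, card_matCube, nsmul_eq_mul]
        push_cast
        ring

theorem HasMatDensity.div_of_abs_mul_matCubeCount_sub_le {S S' : Set (Matrix (Fin n) (Fin m) ℤ)}
    {δ s C : ℝ} (hS : HasMatDensity S δ) (hs : 0 < s)
    (h : ∀ (z : Matrix (Fin n) (Fin m) ℤ) (B : ℕ), 0 < B →
      2 * (B : ℝ) * |s * matCubeCount S' z B - matCubeCount S z B| ≤ C * (2 * B) ^ (n * m)) :
    HasMatDensity S' (δ / s) := by
  intro z
  have hdiff : Tendsto (fun B : ℕ => (matCubeCount S' z B : ℝ) / (2 * (B : ℝ)) ^ (n * m) -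
      (matCubeCount S z B : ℝ) / (2 * (B : ℝ)) ^ (n * m) / s) atTop (nhds 0) := by
    refine squeeze_zero_norm' ?_ (tendsto_const_div_atTop_nhds_zero_nat (C / (2 * s)))
    filter_upwards [eventually_gt_atTop 0] with B hB
    calc ‖(matCubeCount S' z B : ℝ) / (2 * (B : ℝ)) ^ (n * m) -
          (matCubeCount S z B : ℝ) / (2 * (B : ℝ)) ^ (n * m) / s‖
        = |(2 * (B : ℝ) * (s * matCubeCount S' z B - matCubeCount S z B)) /
            (2 * B * (s * (2 * B) ^ (n * m)))| := by
          rw [Real.norm_eq_abs]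
          congr 1
          field_simp
      _ = 2 * (B : ℝ) * |s * matCubeCount S' z B - matCubeCount S z B| /
            (2 * B * (s * (2 * B) ^ (n * m))) := by
          rw [abs_div, abs_mul, abs_of_pos (by positivity : 0 < 2 * (B : ℝ)),
            abs_of_pos (by positivity : 0 < 2 * (B : ℝ) * (s * (2 * B) ^ (n * m)))]
      _ ≤ C * (2 * (B : ℝ)) ^ (n * m) / (2 * B * (s * (2 * B) ^ (n * m))) :=
          div_le_div_of_nonneg_right (h z B hB) (by positivity)
      _ = C / (2 * s) / B := by field_simp
  simpa using hdiff.add ((hS z).div_const s)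

theorem HasMatDensity.div_of_column_abs_residue {S S' : Set (Matrix (Fin n) (Fin m) ℤ)} {δ : ℝ}
    {t : ℕ} [NeZero t] {ρ : ZMod t} (hS : HasMatDensity S δ) (c : Fin m) (hS'S : S' ⊆ S)
    (h : ∀ A ∈ S, ∃ w : Fin n → ℤ, (∃ x, w ⬝ᵥ x = 1) ∧ ∀ a : Fin n → ℤ, A.updateCol c a ∈ S ∧
      (A.updateCol c a ∈ S' ↔ ((|w ⬝ᵥ a| : ℤ) : ZMod t) = ρ)) :
    HasMatDensity S' (δ / t) := by
  classical
  have ht : (0 : ℝ) < t := by exact_mod_cast NeZero.pos t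
  refine hS.div_of_abs_mul_matCubeCount_sub_le ht (C := t * (4 * n * t)) fun z B hB =>
    abs_mul_matCubeCount_sub_le_of_column (c := c) hB fun A => ?_
  by_cases hA : ∃ a, A.updateCol c a ∈ S
  · obtain ⟨a₀, ha₀⟩ := hA
    obtain ⟨w, hw, hwA⟩ := h _ ha₀
    simp only [updateCol_idem] at hwA
    simpa [hwA] using abs_mul_card_intBox_abs_residue_sub_le hw (z.col c) B ρ
  · have hnotS (a : Fin n → ℤ) : A.updateCol c a ∉ S := fun ha => hA ⟨a, ha⟩
    have hnotS' (a : Fin n → ℤ) : A.updateCol c a ∉ S' := fun ha => hnotS a (hS'S ha)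
    simp only [hnotS, hnotS', filter_false, card_empty, Nat.cast_zero, mul_zero, sub_zero, abs_zero]
    positivity

end ColumnDiscrepancy

section HermiteForm

variable {n m N : ℕ}

theorem isUnimodular_iff_isUnit {U : Matrix (Fin n) (Fin n) ℤ} : IsUnimodular U ↔ IsUnit U := by
  rw [isUnit_iff_isUnit_det, Int.isUnit_iff, IsUnimodular]

theorem exists_row_dotProduct_eq_one {U : Matrix (Fin n) (Fin n) ℤ} (hU : IsUnit U) (i : Fin n) :
    ∃ x, U i ⬝ᵥ x = 1 := by
  obtain ⟨U, rfl⟩ := hU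
  exact ⟨fun k => (↑U⁻¹ : Matrix (Fin n) (Fin n) ℤ) k i, by
    simpa [mul_apply'] using congrFun₂ U.mul_inv i i⟩

theorem isHNFOf_iff_exists_isUnit_mul {H A : Matrix (Fin n) (Fin m) ℤ} :
    IsHNFOf H A ↔ IsHNF H ∧ ∃ U : Matrix (Fin n) (Fin n) ℤ, IsUnit U ∧ H = U * A := by
  simp only [IsHNFOf, isUnimodular_iff_isUnit]
  refine and_congr_right fun _ => ⟨?_, ?_⟩ <;>
  · rintro ⟨_, ⟨U, rfl⟩, rfl⟩
    exact ⟨↑U⁻¹, U⁻¹.isUnit, by rw [← Matrix.mul_assoc, U.inv_mul, Matrix.one_mul]⟩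

theorem val_le_val_of_strictMono {r : ℕ} {j : Fin r → Fin m} (hj : StrictMono j) (i : Fin r) :
    (i : ℕ) ≤ j i := by
  simpa using card_le_card_of_injOn (s := Iio i) (t := Iio (j i)) j
    (fun a ha => by simpa using hj (by simpa using ha)) hj.injective.injOn

theorem strictMono_snoc {r : ℕ} {α : Type*} [Preorder α] {j : Fin r → α} (hj : StrictMono j) {p : α}
    (hp : ∀ i, j i < p) : StrictMono (Fin.snoc j p : Fin (r + 1) → α) := by
  intro a b hab
  obtain ⟨a, rfl⟩ := Fin.exists_castSucc_eq.2 (Fin.ne_last_of_lt hab)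
  cases b using Fin.lastCases with
  | last => simpa using hp a
  | cast b => simpa using hj hab

theorem isUnit_one_add_vecMulVec {R ι : Type*} [CommRing R] [Fintype ι] [DecidableEq ι]
    {u v : ι → R} (h : IsUnit (1 + v ⬝ᵥ u)) : IsUnit (1 + vecMulVec u v) := by
  rwa [isUnit_iff_isUnit_det, vecMulVec_eq Unit, det_one_add_replicateCol_mul_replicateRow]

theorem exists_isUnit_mul_col_reduced (G : Matrix (Fin n) (Fin m) ℤ) {i : Fin n} {p : Fin m}
    (hp : G i p ≠ 0) : ∃ W : Matrix (Fin n) (Fin n) ℤ, IsUnit W ∧ 0 < (W * G) i p ∧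
      (∀ k ≠ i, 0 ≤ (W * G) k p ∧ (W * G) k p < (W * G) i p) ∧
      ∀ l, G i l = 0 → ∀ k, (W * G) k l = G k l := by
  let u : Fin n → ℤ := Function.update (fun k => -(G k p / G i p)) i ((G i p).sign - 1)
  let W : Matrix (Fin n) (Fin n) ℤ := 1 + vecMulVec u (Pi.single i 1)
  have hW (k : Fin n) (l : Fin m) : (W * G) k l = G k l + u k * G i l := by
    simp [W, Matrix.add_mul, vecMulVec_mul, vecMulVec_apply]
  have hpivot : (W * G) i p = |G i p| := by
    rw [hW, ← Int.sign_mul_self_eq_abs]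
    simp only [u, Function.update_self]
    ring
  have hcol {k : Fin n} (hk : k ≠ i) : (W * G) k p = G k p % G i p := by
    rw [hW, Int.emod_def]
    simp only [u, Function.update_of_ne hk]
    ring
  refine ⟨W, isUnit_one_add_vecMulVec ?_, hpivot ▸ abs_pos.2 hp, fun k hk => ?_, fun l hl k => ?_⟩
  · simpa [u] using Int.isUnit_iff_abs_eq.2 (Int.abs_sign_of_ne_zero hp)
  · rw [hcol hk, hpivot]
    exact ⟨Int.emod_nonneg _ hp, Int.emod_lt_abs _ hp⟩
  · rw [hW, hl, mul_zero, add_zero]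

theorem IsHNF.apply_eq_zero_of_lt {H : Matrix (Fin n) (Fin m) ℤ} (hH : IsHNF H) {k : Fin n}
    {l : Fin m} (hlk : (l : ℕ) < k) : H k l = 0 := by
  obtain ⟨r, hr, j, hj, hzero, -, hleft, -⟩ := hH
  by_cases hk : (k : ℕ) < r
  · exact hleft ⟨k, hk⟩ l (hlk.trans_le (val_le_val_of_strictMono hj ⟨k, hk⟩))
  · exact hzero k (not_lt.1 hk) l

theorem IsHNF.diag_eq_zero_or_reduced {H : Matrix (Fin n) (Fin m) ℤ} (hH : IsHNF H) {i : Fin n}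
    {l : Fin m} (hil : (i : ℕ) = l) :
    H i l = 0 ∨ 0 < H i l ∧ ∀ k < i, 0 ≤ H k l ∧ H k l < H i l := by
  obtain ⟨r, hr, j, hj, hzero, hpos, hleft, hred⟩ := hH
  by_cases hi : (i : ℕ) < r
  · have hji := val_le_val_of_strictMono hj ⟨i, hi⟩
    rcases hji.eq_or_lt with hpivot | hpivot
    · obtain rfl : l = j ⟨i, hi⟩ := Fin.ext (hil.symm.trans hpivot)
      exact Or.inr ⟨hpos ⟨i, hi⟩, fun k hk => hred ⟨i, hi⟩ k hk⟩
    · exact Or.inl (hleft ⟨i, hi⟩ l (hil ▸ hpivot))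
  · exact Or.inl (hzero i (not_lt.1 hi) l)

/-- The `(N + 1) × N` matrix `L` satisfies the conditions of a Hermite normal form all of whose
pivots are on the diagonal, with values `d`; its last row vanishes. -/
structure HasHermiteDiag (d : Fin N → ℕ) (L : Matrix (Fin (N + 1)) (Fin N) ℤ) : Prop where
  diag (i : Fin N) : L i.castSucc i = d i
  below {k : Fin (N + 1)} {i : Fin N} : i.castSucc < k → L k i = 0
  reduced {k : Fin (N + 1)} {i : Fin N} : k < i.castSucc → 0 ≤ L k i ∧ L k i < L i.castSucc i

/-- The submatrix formed by the first `N` columns. -/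
def leadingCols (hN : N ≤ m) (A : Matrix (Fin n) (Fin m) ℤ) : Matrix (Fin n) (Fin N) ℤ :=
  A.submatrix id (Fin.castLE hN)

theorem leadingCols_mul (hN : N ≤ m) (U : Matrix (Fin n) (Fin n) ℤ) (A : Matrix (Fin n) (Fin m) ℤ) :
    leadingCols hN (U * A) = U * leadingCols hN A :=
  rfl

theorem leadingCols_updateCol (hN : N < m) (A : Matrix (Fin n) (Fin m) ℤ) (a : Fin n → ℤ) :
    leadingCols hN.le (A.updateCol ⟨N, hN⟩ a) = leadingCols hN.le A := by
  ext k i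
  exact updateCol_ne (Fin.ne_of_lt i.isLt)

variable {d : Fin N → ℕ}

theorem IsHNF.hasHermiteDiag_leadingCols {H : Matrix (Fin (N + 1)) (Fin m) ℤ} (hH : IsHNF H)
    (hN : N ≤ m) (hd : ∀ i, 0 < d i) (hdiag : ∀ i : Fin N, H i.castSucc (Fin.castLE hN i) = d i) :
    HasHermiteDiag d (leadingCols hN H) where
  diag := hdiag
  below h := hH.apply_eq_zero_of_lt h
  reduced {k i} h := by
    have hpos : H i.castSucc (Fin.castLE hN i) ≠ 0 := by
      rw [hdiag]
      exact_mod_cast (hd i).ne'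
    exact ((hH.diag_eq_zero_or_reduced rfl).resolve_left hpos).2 k h

theorem HasHermiteDiag.diag_pos {L : Matrix (Fin (N + 1)) (Fin N) ℤ} (hL : HasHermiteDiag d L)
    (hd : ∀ i, 0 < d i) (i : Fin N) : 0 < L i.castSucc i := by
  rw [hL.diag]
  exact_mod_cast hd i

theorem HasHermiteDiag.last_row_eq_zero {L : Matrix (Fin (N + 1)) (Fin N) ℤ}
    (hL : HasHermiteDiag d L) (i : Fin N) : L (Fin.last N) i = 0 :=
  hL.below (Fin.castSucc_lt_last i)

theorem HasHermiteDiag.eq_zero_of_vecMul_eq_zero {L : Matrix (Fin (N + 1)) (Fin N) ℤ}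
    (hL : HasHermiteDiag d L) (hd : ∀ i, 0 < d i) {v : Fin (N + 1) → ℤ} (hv : v ᵥ* L = 0)
    (i : Fin N) : v i.castSucc = 0 := by
  let T : Matrix (Fin N) (Fin N) ℤ := L.submatrix Fin.castSucc id
  have hdet : T.det ≠ 0 := by
    have htri : T.IsUpperTriangular := fun k i hik => hL.below hik
    rw [det_of_isUpperTriangular htri, prod_ne_zero_iff]
    exact fun i _ => (hL.diag_pos hd i).ne'
  have hT : (fun k : Fin N => v k.castSucc) ᵥ* T = 0 := by
    rw [← hv]
    ext i
    simp [vecMul, dotProduct, T, Fin.sum_univ_castSucc, hL.last_row_eq_zero]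
  exact congrFun (Matrix.eq_zero_of_vecMul_eq_zero hdet hT) i

theorem abs_mul_last_row_apply {G : Matrix (Fin (N + 1)) (Fin m) ℤ}
    {V : Matrix (Fin (N + 1)) (Fin (N + 1)) ℤ} {hN : N ≤ m} (hd : ∀ i, 0 < d i) (hV : IsUnit V)
    (hG : HasHermiteDiag d (leadingCols hN G))
    (hVG : HasHermiteDiag d (leadingCols hN (V * G))) (l : Fin m) :
    |(V * G) (Fin.last N) l| = |G (Fin.last N) l| := by
  have hzero (i : Fin N) : V (Fin.last N) i.castSucc = 0 :=
    hG.eq_zero_of_vecMul_eq_zero hd (funext hVG.last_row_eq_zero) i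
  have hunit : IsUnit (V (Fin.last N) (Fin.last N)) := by
    obtain ⟨x, hx⟩ := exists_row_dotProduct_eq_one hV (Fin.last N)
    refine IsUnit.of_mul_eq_one (x (Fin.last N)) ?_
    simpa [dotProduct, Fin.sum_univ_castSucc, hzero] using hx
  simp [mul_apply, Fin.sum_univ_castSucc, hzero, abs_mul, Int.isUnit_iff_abs_eq.1 hunit]

theorem IsHNFOf.last_diag_eq_abs {H A : Matrix (Fin (N + 1)) (Fin m) ℤ}
    {U : Matrix (Fin (N + 1)) (Fin (N + 1)) ℤ} (hH : IsHNFOf H A) (hN : N < m)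
    (hd : ∀ i, 0 < d i) (hdiag : ∀ i : Fin N, H i.castSucc (Fin.castLE hN.le i) = d i)
    (hU : IsUnit U) (hUA : HasHermiteDiag d (U * leadingCols hN.le A)) :
    H (Fin.last N) ⟨N, hN⟩ = |(U * A) (Fin.last N) ⟨N, hN⟩| := by
  obtain ⟨hHNF, V, hV, rfl⟩ := hH
  have hlast : 0 ≤ H (Fin.last N) ⟨N, hN⟩ :=
    (hHNF.diag_eq_zero_or_reduced rfl).elim Eq.ge fun h => h.1.le
  rw [← leadingCols_mul, ← Matrix.mul_assoc] at hUA
  rw [← Matrix.mul_assoc, abs_mul_last_row_apply hd (hU.mul (isUnimodular_iff_isUnit.1 hV))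
    (hHNF.hasHermiteDiag_leadingCols hN.le hd hdiag) hUA, abs_of_nonneg hlast]

theorem isHNF_of_last_row_eq_zero {G : Matrix (Fin (N + 1)) (Fin m) ℤ} {hN : N ≤ m}
    (hd : ∀ i, 0 < d i) (hG : HasHermiteDiag d (leadingCols hN G))
    (hlast : ∀ l, G (Fin.last N) l = 0) : IsHNF G := by
  refine ⟨N, N.le_succ, Fin.castLE hN, Fin.strictMono_castLE hN, fun k hk => ?_, fun i => ?_,
    fun i l hl => ?_, fun i k hk => ?_⟩
  · obtain rfl : k = Fin.last N := (Fin.le_last k).antisymm hk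
    exact hlast
  · exact hG.diag_pos hd i
  · exact hG.below (k := i.castSucc) (i := ⟨l, hl.trans i.isLt⟩) hl
  · exact hG.reduced hk

theorem isHNF_of_last_row_pivot {G : Matrix (Fin (N + 1)) (Fin m) ℤ} {hN : N ≤ m}
    (hd : ∀ i, 0 < d i) (hG : HasHermiteDiag d (leadingCols hN G)) {p : Fin m} (hp : N ≤ p)
    (hpos : 0 < G (Fin.last N) p) (hleft : ∀ l < p, G (Fin.last N) l = 0)
    (hred : ∀ k : Fin N, 0 ≤ G k.castSucc p ∧ G k.castSucc p < G (Fin.last N) p) : IsHNF G := by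
  refine ⟨N + 1, le_rfl, Fin.snoc (Fin.castLE hN) p, ?_, fun k hk => absurd k.isLt hk.not_gt,
    fun i => ?_, fun i l hl => ?_, fun i k hk => ?_⟩
  · exact strictMono_snoc (Fin.strictMono_castLE hN) fun i => i.isLt.trans_le hp
  · cases i using Fin.lastCases with
    | last => simpa using hpos
    | cast i =>
      rw [Fin.snoc_castSucc]
      exact hG.diag_pos hd i
  · cases i using Fin.lastCases with
    | last => exact hleft l (by simpa using hl)
    | cast i =>
      rw [Fin.snoc_castSucc] at hl
      exact hG.below (k := i.castSucc) (i := ⟨l, hl.trans i.isLt⟩) hl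
  · cases i using Fin.lastCases with
    | last =>
      obtain ⟨k, rfl⟩ := Fin.exists_castSucc_eq.2 (Fin.ne_of_lt hk)
      simpa using hred k
    | cast i =>
      rw [Fin.snoc_castSucc]
      exact hG.reduced hk

theorem exists_isUnit_isHNF_mul {G : Matrix (Fin (N + 1)) (Fin m) ℤ} {hN : N ≤ m}
    (hd : ∀ i, 0 < d i) (hG : HasHermiteDiag d (leadingCols hN G)) :
    ∃ W : Matrix (Fin (N + 1)) (Fin (N + 1)) ℤ, IsUnit W ∧ IsHNF (W * G) ∧
      leadingCols hN (W * G) = leadingCols hN G := by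
  by_cases hlast : ∀ l, G (Fin.last N) l = 0
  · exact ⟨1, isUnit_one, by simpa using isHNF_of_last_row_eq_zero hd hG hlast, by simp⟩
  push Not at hlast
  obtain ⟨p, hp, hmin⟩ := wellFounded_lt.has_min {l | G (Fin.last N) l ≠ 0} hlast
  have hleft {l : Fin m} (hl : l < p) : G (Fin.last N) l = 0 := of_not_not fun h => hmin l h hl
  have hNp : N ≤ p := not_lt.1 fun h => hp (hG.last_row_eq_zero ⟨p, h⟩)
  obtain ⟨W, hW, hpos, hred, hWG⟩ := exists_isUnit_mul_col_reduced G hp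
  have hlead : leadingCols hN (W * G) = leadingCols hN G := by
    ext k i
    exact hWG _ (hG.last_row_eq_zero i) k
  refine ⟨W, hW, ?_, hlead⟩
  exact isHNF_of_last_row_pivot hd (hlead ▸ hG) hNp hpos
    (fun l hl => (hWG l (hleft hl) _).trans (hleft hl)) fun k => hred _ (Fin.castSucc_ne_last k)

theorem exists_isHNFOf_diag_eq_iff (hN : N ≤ m) (hd : ∀ i, 0 < d i)
    {A : Matrix (Fin (N + 1)) (Fin m) ℤ} :
    (∃ H, IsHNFOf H A ∧ ∀ i : Fin N, H i.castSucc (Fin.castLE hN i) = d i) ↔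
      ∃ U : Matrix (Fin (N + 1)) (Fin (N + 1)) ℤ, IsUnit U ∧
        HasHermiteDiag d (U * leadingCols hN A) := by
  simp only [isHNFOf_iff_exists_isUnit_mul]
  constructor
  · rintro ⟨_, ⟨hH, U, hU, rfl⟩, hdiag⟩
    exact ⟨U, hU, hH.hasHermiteDiag_leadingCols hN hd hdiag⟩
  · rintro ⟨U, hU, hUA⟩
    obtain ⟨W, hW, hHNF, hlead⟩ := exists_isUnit_isHNF_mul (G := U * A) hd hUA
    refine ⟨W * (U * A), ⟨hHNF, W * U, hW.mul hU, (Matrix.mul_assoc W U A).symm⟩, fun i => ?_⟩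
    exact (congrFun₂ hlead i.castSucc i).trans (hUA.diag i)

end HermiteForm

/-- For `n ≤ m` and a residue class `r mod t`, the density of matrices whose HNF
diagonal is `(d_1, …, d_{n-1}, a)` with `a ≡ r (mod t)` is `1/t` times the density
of matrices whose HNF diagonal begins with `(d_1, …, d_{n-1})`. -/
theorem density_hnf_last_diag_residue (n m : ℕ) (hn : 2 ≤ n) (hnm : n ≤ m)
    (d : Fin (n - 1) → ℕ) (hd : ∀ i, 0 < d i) (t r : ℕ) (hrt : r < t)
    (δ : ℝ)
    (hδ : HasMatDensity
      {A : Matrix (Fin n) (Fin m) ℤ | ∃ H, IsHNFOf H A ∧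
        ∀ i : Fin (n - 1),
          H (Fin.castLE (Nat.sub_le n 1) i)
            (Fin.castLE (le_trans (Nat.sub_le n 1) hnm) i) = (d i : ℤ)} δ) :
    HasMatDensity
      {A : Matrix (Fin n) (Fin m) ℤ | ∃ H, IsHNFOf H A ∧
        (∀ i : Fin (n - 1),
          H (Fin.castLE (Nat.sub_le n 1) i)
            (Fin.castLE (le_trans (Nat.sub_le n 1) hnm) i) = (d i : ℤ)) ∧
        H ⟨n - 1, Nat.sub_lt (lt_of_lt_of_le Nat.zero_lt_two hn) Nat.one_pos⟩
            ⟨n - 1, lt_of_lt_of_le (Nat.sub_lt (lt_of_lt_of_le Nat.zero_lt_two hn) Nat.one_pos) hnm⟩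
          % (t : ℤ) = (r : ℤ)}
      (δ / (t : ℝ)) := by
  obtain ⟨N, rfl⟩ : ∃ N, n = N + 1 := ⟨n - 1, by omega⟩
  have : NeZero t := ⟨by omega⟩
  refine hδ.div_of_column_abs_residue (ρ := (r : ZMod t)) ⟨N, hnm⟩
    (fun A ⟨H, hH, hdiag, _⟩ => ⟨H, hH, hdiag⟩) fun A hA => ?_
  obtain ⟨U, hU, hUA⟩ := (exists_isHNFOf_diag_eq_iff (Nat.le_of_lt hnm) hd).1 hA
  refine ⟨U (Fin.last N), exists_row_dotProduct_eq_one hU _, fun a => ?_⟩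
  rw [← leadingCols_updateCol hnm A a] at hUA
  obtain ⟨H, hH, hdiag⟩ := (exists_isHNFOf_diag_eq_iff (Nat.le_of_lt hnm) hd).2 ⟨U, hU, hUA⟩
  have hlast {H : Matrix (Fin (N + 1)) (Fin m) ℤ} (hH : IsHNFOf H (A.updateCol ⟨N, hnm⟩ a))
      (hdiag : ∀ i : Fin N, H i.castSucc (Fin.castLE (Nat.le_of_lt hnm) i) = d i) :
      ((|U (Fin.last N) ⬝ᵥ a| : ℤ) : ZMod t) = r ↔ H (Fin.last N) ⟨N, hnm⟩ % t = r := by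
    rw [intCast_eq_natCast_iff_emod_eq hrt, hH.last_diag_eq_abs hnm hd hdiag hU hUA,
      mul_updateCol, updateCol_self, mulVec]
  exact ⟨⟨H, hH, hdiag⟩, fun ⟨_, hH, hdiag, hr⟩ => (hlast hH hdiag).2 hr,
    fun hr => ⟨H, hH, hdiag, (hlast hH hdiag).1 hr⟩⟩
end
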